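/- With σ_e² = 1, σ_d² = 3, σ_W² = 0.4, P̄ = 0.1 and zero subjective means, define the quantizer encoder x(m) = √0.1·sgn(m) and the decoder ψ(y) = √(2/π)·√3·tanh(√0.1·y/0.4) (which is the decoder's best response to the quantizer under its prior N(0,3)). Then the integral of (m − ψ(√0.1·sgn(m) + w))² with respect to (gaussianReal 0 1) ⊗ (gaussianReal 0 0.4) is strictly less than g(t) for every t ∈ [0, 0.1], where g(t) = (t·9·0.4 + 0.4²·1)/(3t + 0.4)². -/

import Mathlib

open MeasureTheory ProbabilityTheory

open scoped NNReal

@[fun_prop]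
theorem continuous_real_tanh : Continuous Real.tanh := by
  have h : Real.tanh = fun x => Real.sinh x / Real.cosh x :=
    funext Real.tanh_eq_sinh_div_cosh
  rw [h]
  exact Real.continuous_sinh.div Real.continuous_cosh fun x => (Real.cosh_pos x).ne'

@[fun_prop]
theorem measurable_real_sign : Measurable Real.sign :=
  Measurable.ite measurableSet_Iio measurable_const
    (Measurable.ite measurableSet_Ioi measurable_const measurable_const)

theorem real_tanh_eq_zero_iff (x : ℝ) : Real.tanh x = 0 ↔ x = 0 := by
  rw [Real.tanh_eq_sinh_div_cosh, div_eq_zero_iff, Real.sinh_eq_zero]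
  simp [(Real.cosh_pos x).ne']

theorem exp_mul_one_add_tanh (x : ℝ) :
    Real.exp (-(2 * x)) * (1 + Real.tanh x) = 1 - Real.tanh x := by
  rw [Real.tanh_eq, show -(2 * x) = -x + -x by ring, Real.exp_add]
  have h : Real.exp x * Real.exp (-x) = 1 := by rw [← Real.exp_add]; simp
  have h1 := Real.exp_pos x
  have h2 := Real.exp_pos (-x)
  field_simp
  linear_combination (2 * Real.exp (-x)) * h

theorem integrable_tanh_mul_div_pow (μ : Measure ℝ) [IsFiniteMeasure μ] (a v : ℝ) (n : ℕ) :
    Integrable (fun y => Real.tanh (a * y / v) ^ n) μ :=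
  Integrable.of_bound (by fun_prop) 1 (.of_forall fun y => by
    rw [norm_pow]
    exact pow_le_one₀ (norm_nonneg _) (Real.abs_tanh_lt_one _).le)

theorem integral_gaussianReal_tanh_eq_tanh_sq (a : ℝ) {v : ℝ≥0} (hv : v ≠ 0) :
    ∫ y, Real.tanh (a * y / v) ∂gaussianReal a v =
      ∫ y, Real.tanh (a * y / v) ^ 2 ∂gaussianReal a v := by
  have hi : Integrable (fun y => Real.tanh (a * y / v)) (gaussianReal a v) := by
    simpa using integrable_tanh_mul_div_pow (gaussianReal a v) a v 1
  have hi2 := integrable_tanh_mul_div_pow (gaussianReal a v) a v 2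
  rw [← sub_eq_zero, ← integral_sub hi hi2, integral_gaussianReal_eq_integral_smul hv]
  have hv' : (v : ℝ) ≠ 0 := by exact_mod_cast hv
  set h : ℝ → ℝ := fun y =>
    gaussianPDFReal a v y • (Real.tanh (a * y / v) - Real.tanh (a * y / v) ^ 2) with hh
  have hodd (y : ℝ) : h (-y) = -h y := by
    have hpdf : gaussianPDFReal a v (-y) =
        gaussianPDFReal a v y * Real.exp (-(2 * (a * y / v))) := by
      simp only [gaussianPDFReal, mul_assoc, ← Real.exp_add]
      congr 2
      field_simp
      ring
    have hT := exp_mul_one_add_tanh (a * y / v)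
    simp only [hh, smul_eq_mul, hpdf, mul_neg, neg_div, Real.tanh_neg]
    linear_combination (-gaussianPDFReal a v y * Real.tanh (a * y / v)) * hT
  have h1 := integral_neg_eq_self h volume
  simp only [hodd, integral_neg] at h1
  linarith

theorem integral_gaussianReal_tanh_sq_pos {a : ℝ} (ha : a ≠ 0) {v : ℝ≥0} (hv : v ≠ 0) :
    0 < ∫ y, Real.tanh (a * y / v) ^ 2 ∂gaussianReal a v := by
  rw [integral_pos_iff_support_of_nonneg (fun y => sq_nonneg _)
    (integrable_tanh_mul_div_pow _ a v 2)]
  have := nullSingletonClass_gaussianReal (μ := a) hv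
  have hs : Function.support (fun y : ℝ => Real.tanh (a * y / v) ^ 2) = {0}ᶜ := by
    ext y
    simp [real_tanh_eq_zero_iff, ha, hv]
  rw [hs, prob_compl_eq_one_sub (measurableSet_singleton _), measure_singleton]
  simp

theorem integral_gaussianReal_sq_sub_tanh (k c a : ℝ) {v : ℝ≥0} (hv : v ≠ 0) :
    ∫ y, (k - c * Real.tanh (a * y / v)) ^ 2 ∂gaussianReal a v =
      k ^ 2 - (2 * k * c - c ^ 2) * ∫ y, Real.tanh (a * y / v) ^ 2 ∂gaussianReal a v := by
  have hi : Integrable (fun y => Real.tanh (a * y / v)) (gaussianReal a v) := by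
    simpa using integrable_tanh_mul_div_pow (gaussianReal a v) a v 1
  have hi2 := integrable_tanh_mul_div_pow (gaussianReal a v) a v 2
  have he (y : ℝ) : (k - c * Real.tanh (a * y / v)) ^ 2 =
      k ^ 2 - 2 * k * c * Real.tanh (a * y / v) + c ^ 2 * Real.tanh (a * y / v) ^ 2 := by ring
  simp only [he]
  rw [integral_add (f := fun y => k ^ 2 - 2 * k * c * Real.tanh (a * y / v))
      ((integrable_const _).sub (hi.const_mul _)) (hi2.const_mul _),
    integral_sub (integrable_const _) (hi.const_mul _), integral_const_mul, integral_const_mul,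
    integral_gaussianReal_tanh_eq_tanh_sq a hv]
  simp
  ring

theorem integral_gaussianReal_sq_sub_tanh_sign {m : ℝ} (hm : m ≠ 0) (c a : ℝ) {v : ℝ≥0}
    (hv : v ≠ 0) :
    ∫ w, (m - c * Real.tanh (a * (a * Real.sign m + w) / v)) ^ 2 ∂gaussianReal 0 v =
      m ^ 2 - (2 * |m| * c - c ^ 2) *
        ∫ y, Real.tanh (a * y / v) ^ 2 ∂gaussianReal a v := by
  have key : ∫ y, (|m| - c * Real.tanh (a * y / v)) ^ 2 ∂gaussianReal a v =
      ∫ w, (|m| - c * Real.tanh (a * (a + w) / v)) ^ 2 ∂gaussianReal 0 v := by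
    have h := gaussianReal_map_const_add (μ := 0) (v := v) a
    rw [zero_add] at h
    rw [← h, integral_map (by fun_prop) (by fun_prop)]
  rw [← sq_abs m, ← integral_gaussianReal_sq_sub_tanh _ _ _ hv, key]
  rcases hm.lt_or_gt with hm | hm
  · have h := gaussianReal_map_neg (μ := 0) (v := v)
    rw [neg_zero] at h
    conv_rhs => rw [← h]
    rw [integral_map (by fun_prop) (by fun_prop)]
    congr 1 with w
    rw [Real.sign_of_neg hm, abs_of_neg hm,
      show a * (a * -1 + w) / v = -(a * (a + -w) / v) by ring, Real.tanh_neg]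
    ring
  · simp [Real.sign_of_pos hm, abs_of_pos hm]

theorem integral_abs_gaussianReal_zero_one :
    ∫ x, |x| ∂gaussianReal 0 1 = Real.sqrt (2 / Real.pi) := by
  let f : ℝ → ℝ := fun z =>
    (Real.sqrt (2 * Real.pi))⁻¹ * (z ^ (1 : ℝ) * Real.exp (-(1 / 2) * z ^ (2 : ℝ)))
  have hpdf (x : ℝ) : gaussianPDFReal 0 1 x • |x| = f |x| := by
    simp [gaussianPDFReal, f]
    ring_nf
  rw [integral_gaussianReal_eq_integral_smul one_ne_zero]
  rw [integral_congr_ae (.of_forall hpdf), integral_comp_abs (f := f), integral_const_mul,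
    integral_rpow_mul_exp_neg_mul_rpow (by norm_num) (by norm_num) (by norm_num)]
  norm_num [Real.rpow_neg_one]
  have hp := Real.sqrt_pos.2 Real.pi_pos
  have h2 : Real.sqrt 2 * Real.sqrt 2 = 2 := by simp
  field_simp
  linarith

theorem integral_sq_gaussianReal_zero_one : ∫ x, x ^ 2 ∂gaussianReal 0 1 = 1 := by
  have h := variance_fun_id_gaussianReal (μ := 0) (v := 1)
  rw [variance_of_integral_eq_zero (by fun_prop) (by simp)] at h
  simpa using h

/-- The mean squared error of the one-bit quantizer with amplitude `a` over a Gaussian channel of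
noise variance `v`, for a standard Gaussian source and the decoder `c * tanh (a y / v)`. -/
theorem integral_sq_sub_tanh_quantizer (c a : ℝ) {v : ℝ≥0} (hv : v ≠ 0) :
    ∫ p, (p.1 - c * Real.tanh (a * (a * Real.sign p.1 + p.2) / v)) ^ 2
        ∂((gaussianReal 0 1).prod (gaussianReal 0 v)) =
      1 - (2 * Real.sqrt (2 / Real.pi) * c - c ^ 2) *
        ∫ y, Real.tanh (a * y / v) ^ 2 ∂gaussianReal a v := by
  have hid : MemLp id 2 (gaussianReal 0 1) := memLp_id_gaussianReal 2
  have hfst : MemLp (fun p : ℝ × ℝ => p.1) 2 ((gaussianReal 0 1).prod (gaussianReal 0 v)) :=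
    hid.comp_fst _
  have hdec : MemLp (fun p : ℝ × ℝ => c * Real.tanh (a * (a * Real.sign p.1 + p.2) / v)) 2
      ((gaussianReal 0 1).prod (gaussianReal 0 v)) := by
    refine MemLp.const_mul (MemLp.of_bound ?_ 1
      (.of_forall fun p => (Real.abs_tanh_lt_one _).le)) c
    exact (continuous_real_tanh.measurable.comp (by fun_prop)).aestronglyMeasurable
  refine (integral_prod _ (hfst.sub hdec).integrable_sq).trans ?_
  simp only [Pi.sub_apply]
  have := nullSingletonClass_gaussianReal (μ := 0) (v := 1) one_ne_zero
  have hae : ∀ᵐ m ∂gaussianReal 0 1, m ≠ 0 := by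
    simp [ae_iff]
  rw [integral_congr_ae (hae.mono fun m hm =>
    integral_gaussianReal_sq_sub_tanh_sign hm c a hv)]
  set q := ∫ y, Real.tanh (a * y / v) ^ 2 ∂gaussianReal a v
  have hsq : Integrable (fun x : ℝ => x ^ 2) (gaussianReal 0 1) := hid.integrable_sq
  have habs : Integrable (fun x : ℝ => |x|) (gaussianReal 0 1) :=
    (hid.integrable one_le_two).abs
  have he (m : ℝ) : m ^ 2 - (2 * |m| * c - c ^ 2) * q =
      m ^ 2 - 2 * c * q * |m| + c ^ 2 * q := by ring
  simp only [he]
  rw [integral_add (f := fun m => m ^ 2 - 2 * c * q * |m|)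
      (hsq.sub (habs.const_mul _)) (integrable_const _),
    integral_sub hsq (habs.const_mul _), integral_const_mul,
    integral_abs_gaussianReal_zero_one, integral_sq_gaussianReal_zero_one]
  simp
  ring

theorem stmt15 :
    let ψ : ℝ → ℝ := fun y =>
      Real.sqrt (2 / Real.pi) * Real.sqrt 3 * Real.tanh (Real.sqrt 0.1 * y / 0.4)
    let ν : Measure (ℝ × ℝ) :=
      (gaussianReal 0 1).prod (gaussianReal 0 ⟨0.4, by norm_num⟩)
    let g : ℝ → ℝ := fun t => (t * 9 * 0.4 + 0.4 ^ 2 * 1) / (3 * t + 0.4) ^ 2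
    ∀ t ∈ Set.Icc (0 : ℝ) 0.1,
      (∫ p, (p.1 - ψ (Real.sqrt 0.1 * Real.sign p.1 + p.2)) ^ 2 ∂ν) < g t := by
  intro ψ ν g t ht
  obtain ⟨ht0, ht1⟩ := ht
  have hg : 1 ≤ g t := by
    simp only [g]
    rw [le_div_iff₀ (by positivity)]
    nlinarith
  refine lt_of_lt_of_le ?_ hg
  have hv : (⟨0.4, by norm_num⟩ : ℝ≥0) ≠ 0 :=
    fun h => absurd (congrArg NNReal.toReal h) (by norm_num [NNReal.toReal])
  have hq := integral_gaussianReal_tanh_sq_pos (a := Real.sqrt 0.1)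
    (Real.sqrt_pos.2 (by norm_num)).ne' hv
  have hI := integral_sq_sub_tanh_quantizer (Real.sqrt (2 / Real.pi) * Real.sqrt 3)
    (Real.sqrt 0.1) hv
  refine hI.trans_lt (sub_lt_self _ (mul_pos ?_ hq))
  have h3 : Real.sqrt 3 < 2 := by
    rw [Real.sqrt_lt' (by norm_num)]
    norm_num
  have h3' : 0 < Real.sqrt 3 := by positivity
  have hp : 0 < Real.sqrt (2 / Real.pi) := Real.sqrt_pos.2 (by positivity)
  have : 0 < Real.sqrt (2 / Real.pi) ^ 2 * Real.sqrt 3 * (2 - Real.sqrt 3) := by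
    have := sub_pos.2 h3
    positivity
  linarith
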